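/- arXiv:2010.04601 — 7 statements merged into one kernel-verified Lean document; each statement's English description precedes it below -/
import Mathlib

section
/- Let E be a set and φ: E × [0,∞) → E a flow with φ(x,0) = x and the semigroup property φ(φ(x,s),t) = φ(x,t+s) for all x ∈ E and s,t ≥ 0. Let w: E → ℝ be absolutely continuous along the flow, in the sense that for every x ∈ E there exists a function g_x: [0,∞) → ℝ, Lebesgue integrable on every bounded interval, with w(φ(x,t)) − w(x) = ∫₀ᵗ g_x(s) ds for all t ≥ 0. Then there exists a single function χ: E → ℝ such that for every x ∈ E and every t ≥ 0 the function s ↦ χ(φ(x,s)) is Lebesgue integrable on [0,t] and w(φ(x,t)) − w(x) = ∫₀ᵗ χ(φ(x,s)) ds. -/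
open MeasureTheory

/-!
The value `χ y` is the right derivative at time `0` of `t ↦ w (φ y t)`. By the semigroup property,
`χ (φ x s)` is then the right derivative at time `s` of `t ↦ w (φ x t)`, so by Lebesgue's
differentiation theorem `s ↦ χ (φ x s)` agrees almost everywhere with every density `g` of `w` along
the trajectory of `x`. Thus `χ`, which depends on the point alone, can replace the densities of all
trajectories at once.
-/

section

open Set
open scoped Pointwise

variable {E F : Type*} [NormedAddCommGroup F] [NormedSpace ℝ F]

theorem ae_hasDerivAt_of_sub_eq_integral [CompleteSpace F] {f g : ℝ → F} {c : F} {a b : ℝ}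
    (hg : IntegrableOn g (Icc a b)) (hf : ∀ t ∈ Icc a b, f t - c = ∫ s in Icc a t, g s) :
    ∀ᵐ s ∂volume.restrict (Icc a b), HasDerivAt f (g s) s := by
  rcases lt_or_ge b a with hba | hab
  · simp [Icc_eq_empty_of_lt hba]
  have hprimitive : ∀ t ∈ Icc a b, f t = (∫ s in a..t, g s) + c := fun t ht ↦ by
    rw [intervalIntegral.integral_of_le ht.1, ← integral_Icc_eq_integral_Ioc, ← hf t ht,
      sub_add_cancel]
  have hgi : IntervalIntegrable g volume a b :=
    (intervalIntegrable_iff_integrableOn_Icc_of_le hab).2 hg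
  rw [← restrict_Ioo_eq_restrict_Icc, ae_restrict_iff' measurableSet_Ioo]
  filter_upwards [hgi.ae_hasDerivAt_integral] with s hderiv hs
  rw [uIcc_of_le hab] at hderiv
  have hprimitive_deriv : HasDerivAt (fun t ↦ (∫ r in a..t, g r) + c) (g s) s :=
    (hderiv (Ioo_subset_Icc_self hs) a (left_mem_Icc.2 hab)).add_const c
  exact hprimitive_deriv.congr_of_eventuallyEq <|
    Filter.eventually_of_mem (Icc_mem_nhds hs.1 hs.2) hprimitive

/-- The derivative of `w` along the flow `φ`: the right derivative of `t ↦ w (φ y t)` at `t = 0`,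
with the value `0` at the points `y` where this derivative does not exist. -/
noncomputable def derivAlongFlow (φ : E → ℝ → E) (w : E → F) (y : E) : F :=
  derivWithin (fun t ↦ w (φ y t)) (Ici 0) 0

theorem derivAlongFlow_apply_flow {φ : E → ℝ → E} {x : E} {s : ℝ}
    (hφ : ∀ t, 0 ≤ t → φ (φ x s) t = φ x (t + s)) (w : E → F) :
    derivAlongFlow φ w (φ x s) = derivWithin (fun t ↦ w (φ x t)) (Ici s) s := by
  have htranslate : s +ᵥ Ici (0 : ℝ) = Ici s := by
    simp only [← image_vadd, vadd_eq_add, image_const_add_Ici, add_zero]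
  calc derivWithin (fun t ↦ w (φ (φ x s) t)) (Ici 0) 0
      = derivWithin (fun t ↦ w (φ x (t + s))) (Ici 0) 0 :=
        derivWithin_congr (fun t ht ↦ congrArg w (hφ t ht)) (congrArg w (hφ 0 le_rfl))
    _ = derivWithin (fun t ↦ w (φ x t)) (Ici s) s := by
        rw [derivWithin_comp_add_const (fun t ↦ w (φ x t)) s, htranslate, zero_add]

variable [CompleteSpace F]

theorem derivAlongFlow_ae_eq_of_sub_eq_integral {φ : E → ℝ → E} {w : E → F} {x : E} {g : ℝ → F}
    {T : ℝ} (hφ : ∀ s t : ℝ, 0 ≤ s → 0 ≤ t → φ (φ x s) t = φ x (t + s))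
    (hg : IntegrableOn g (Icc 0 T))
    (hw : ∀ t ∈ Icc 0 T, w (φ x t) - w x = ∫ s in Icc 0 t, g s) :
    (fun s ↦ derivAlongFlow φ w (φ x s)) =ᵐ[volume.restrict (Icc 0 T)] g := by
  filter_upwards [ae_hasDerivAt_of_sub_eq_integral hg hw, ae_restrict_mem measurableSet_Icc]
    with s hderiv hs
  rw [derivAlongFlow_apply_flow (fun t ↦ hφ s t hs.1)]
  exact hderiv.hasDerivWithinAt.derivWithin (uniqueDiffOn_Ici s s self_mem_Ici)

theorem exists_chi_of_absolutelyContinuous_along_flow_general (φ : E → ℝ → E) (w : E → F)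
    (hφ : ∀ x, ∀ s t : ℝ, 0 ≤ s → 0 ≤ t → φ (φ x s) t = φ x (t + s))
    (hw : ∀ x : E, ∃ g : ℝ → F, (∀ T : ℝ, 0 ≤ T → IntegrableOn g (Icc 0 T)) ∧
      ∀ t : ℝ, 0 ≤ t → w (φ x t) - w x = ∫ s in Icc 0 t, g s) :
    ∃ χ : E → F, ∀ x : E, ∀ t : ℝ, 0 ≤ t →
      IntegrableOn (fun s ↦ χ (φ x s)) (Icc 0 t) ∧
      w (φ x t) - w x = ∫ s in Icc 0 t, χ (φ x s) := by
  refine ⟨derivAlongFlow φ w, fun x t ht ↦ ?_⟩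
  obtain ⟨g, hg, hwg⟩ := hw x
  have hχg : (fun s ↦ derivAlongFlow φ w (φ x s)) =ᵐ[volume.restrict (Icc 0 t)] g :=
    derivAlongFlow_ae_eq_of_sub_eq_integral (hφ x) (hg t ht) fun r hr ↦ hwg r hr.1
  exact ⟨(hg t ht).congr hχg.symm, (hwg t ht).trans (integral_congr_ae hχg).symm⟩

end

/-- Paper's Lemma A.2(a): existence of a single "derivative along the flow" function
`χ` for a function `w` which is absolutely continuous along a flow `φ`. -/
theorem exists_chi_of_absolutelyContinuous_along_flow
    {E : Type*} (φ : E → ℝ → E) (w : E → ℝ)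
    (hφ0 : ∀ x, φ x 0 = x)
    (hφsemi : ∀ x, ∀ s t : ℝ, 0 ≤ s → 0 ≤ t → φ (φ x s) t = φ x (t + s))
    (hAC : ∀ x : E, ∃ g : ℝ → ℝ,
      (∀ T : ℝ, 0 ≤ T → IntegrableOn g (Set.Icc 0 T) volume) ∧
      ∀ t : ℝ, 0 ≤ t → w (φ x t) - w x = ∫ s in Set.Icc 0 t, g s) :
    ∃ χ : E → ℝ, ∀ x : E, ∀ t : ℝ, 0 ≤ t →
      IntegrableOn (fun s => χ (φ x s)) (Set.Icc 0 t) volume ∧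
      w (φ x t) - w x = ∫ s in Set.Icc 0 t, χ (φ x s) :=
  exists_chi_of_absolutelyContinuous_along_flow_general φ w hφsemi hAC
end

section
/- Let m be a finite Borel measure on ℝ. Then for all τ, t ∈ ℝ: t · m([τ, τ+t]) = ∫_{(0,t]} m([τ, τ+s)) ds + ∫_{(τ, τ+t]} (s − τ) dm(s), where the first integral is with respect to Lebesgue measure and the second with respect to m. -/
open MeasureTheory

/-! Apply the layer-cake formula to `x ↦ x - τ` on `(τ, τ + t]`, whose superlevel set at height
`s` is `[τ + s, τ + t]`, and subtract: `m [τ + s, τ + t] = m [τ, τ + t] - m [τ, τ + s)`. -/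

section Order

open Set

variable {α : Type*} [MeasurableSpace α] {μ : Measure α} {a b c : α}

lemma monotoneOn_measureReal_Ico [Preorder α] (h : μ (Ico a b) ≠ ⊤) :
    MonotoneOn (fun x => μ.real (Ico a x)) (Iic b) := fun _ _ _ hyb hxy =>
  measureReal_mono (Ico_subset_Ico_right hxy)
    (measure_ne_top_of_subset (Ico_subset_Ico_right hyb) h)

lemma measureReal_Icc_eq_Icc_sub_Ico [LinearOrder α] [TopologicalSpace α] [OrderClosedTopology α]
    [OpensMeasurableSpace α] (hab : a ≤ b) (hbc : b ≤ c) (h : μ (Icc a c) ≠ ⊤) :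
    μ.real (Icc b c) = μ.real (Icc a c) - μ.real (Ico a b) := by
  have hdisj : Disjoint (Ico a b) (Icc b c) :=
    disjoint_left.2 fun _ hx hx' => hx.2.not_ge hx'.1
  rw [← Ico_union_Icc_eq_Icc hab hbc] at h ⊢
  rw [measureReal_union hdisj measurableSet_Icc
    (measure_ne_top_of_subset subset_union_left h)
    (measure_ne_top_of_subset subset_union_right h), add_sub_cancel_left]

end Order

section Real

open Set

variable {m : Measure ℝ} {a b τ t : ℝ}

lemma integrableOn_Ioc_sub_left_endpoint (h : m (Ioc a b) ≠ ⊤) :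
    IntegrableOn (fun x => x - a) (Ioc a b) m := by
  refine Measure.integrableOn_of_bounded (M := b - a) h (by fun_prop) ?_
  filter_upwards [ae_restrict_mem measurableSet_Ioc] with x hx
  rw [Real.norm_of_nonneg (sub_nonneg.2 hx.1.le)]
  exact sub_le_sub_right hx.2 a

lemma setIntegral_Ioc_sub_left_endpoint_eq_integral_measureReal_Icc
    (h : IntegrableOn (fun x => x - a) (Ioc a b) m) :
    ∫ x in Ioc a b, (x - a) ∂m = ∫ s in Ioc 0 (b - a), m.real (Icc (a + s) b) := by
  have hmem : ∀ᵐ x ∂m.restrict (Ioc a b), x ∈ Ioc a b := ae_restrict_mem measurableSet_Ioc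
  rw [h.integral_eq_integral_Ioc_meas_le (hmem.mono fun x hx => sub_nonneg.2 hx.1.le)
    (hmem.mono fun x hx => sub_le_sub_right hx.2 a)]
  refine setIntegral_congr_fun measurableSet_Ioc fun s hs => ?_
  have hsuperlevel : {x | s ≤ x - a} ∩ Ioc a b = Icc (a + s) b := by
    ext x
    simp only [mem_inter_iff, mem_ofPred_eq, mem_Ioc, mem_Icc]
    grind
  change (m.restrict (Ioc a b)).real {x | s ≤ x - a} = _
  rw [measureReal_restrict_apply' measurableSet_Ioc, hsuperlevel]

lemma integrableOn_measureReal_Ico_add (h : m (Ico τ (τ + t)) ≠ ⊤) :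
    IntegrableOn (fun s => m.real (Ico τ (τ + s))) (Ioc 0 t) := by
  have hmono : MonotoneOn (fun s => m.real (Ico τ (τ + s))) (Icc 0 t) :=
    fun s hs u hu hsu => monotoneOn_measureReal_Ico h (add_le_add_right hs.2 τ)
      (add_le_add_right hu.2 τ) (add_le_add_right hsu τ)
  exact (hmono.integrableOn_isCompact isCompact_Icc).mono_set Ioc_subset_Icc_self

theorem finite_measure_interval_identity_closed_general (h : m (Icc τ (τ + t)) ≠ ⊤) :
    t * m.real (Icc τ (τ + t))
      = (∫ s in Ioc 0 t, m.real (Ico τ (τ + s)))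
        + ∫ s in Ioc τ (τ + t), (s - τ) ∂m := by
  rcases lt_or_ge t 0 with ht | ht
  · simp [ht, ht.le]
  have hlayer : ∫ s in Ioc τ (τ + t), (s - τ) ∂m
      = ∫ s in Ioc 0 t, m.real (Icc (τ + s) (τ + t)) := by
    have hint := integrableOn_Ioc_sub_left_endpoint
      (measure_ne_top_of_subset Ioc_subset_Icc_self h)
    rw [setIntegral_Ioc_sub_left_endpoint_eq_integral_measureReal_Icc hint, add_sub_cancel_left]
  have hsplit : ∀ s ∈ Ioc 0 t, m.real (Icc (τ + s) (τ + t))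
      = m.real (Icc τ (τ + t)) - m.real (Ico τ (τ + s)) := fun s hs =>
    measureReal_Icc_eq_Icc_sub_Ico (le_add_of_nonneg_right hs.1.le) (add_le_add_right hs.2 τ) h
  have hconst : ∫ _ in Ioc 0 t, m.real (Icc τ (τ + t)) = t * m.real (Icc τ (τ + t)) := by
    simp [ht]
  rw [hlayer, setIntegral_congr_fun measurableSet_Ioc hsplit,
    integral_sub (integrable_const _) (integrableOn_measureReal_Ico_add
      (measure_ne_top_of_subset Ico_subset_Icc_self h)), hconst, add_sub_cancel]

end Real

/-- First identity of the paper's Lemma A.4: for a finite Borel measure `m` on `ℝ`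
and all `τ, t ∈ ℝ`,
`t · m([τ, τ+t]) = ∫_{(0,t]} m([τ, τ+s)) ds + ∫_{(τ, τ+t]} (s − τ) dm(s)`. -/
theorem finite_measure_interval_identity_closed
    (m : Measure ℝ) [IsFiniteMeasure m] (τ t : ℝ) :
    t * (m (Set.Icc τ (τ + t))).toReal
      = (∫ s in Set.Ioc (0 : ℝ) t, (m (Set.Ico τ (τ + s))).toReal)
        + ∫ s in Set.Ioc τ (τ + t), (s - τ) ∂m :=
  finite_measure_interval_identity_closed_general (measure_ne_top m _)
end

section
/- Let m be a finite Borel measure on ℝ. Then for all τ, t ∈ ℝ: t · m([τ, τ+t)) = ∫_{[0,t)} m([τ, τ+s)) ds + ∫_{[τ, τ+t)} (s − τ) dm(s), where the first integral is with respect to Lebesgue measure and the second with respect to m. -/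
open MeasureTheory

open Set

/-!
The layer-cake formula applied to `C - f`, for a function `0 ≤ f ≤ C` on a finite measure space,
gives `∫ (C - f) dμ = ∫_{[0,C)} μ{f < r} dr`. The identity is the case where `μ` is the restriction
of `m` to `[τ, τ+t)`, `f u = u - τ` and `C = t`, since then `{f < s}` cuts out `[τ, τ+s)`.
-/

section SublevelLayercake

variable {α : Type*} [MeasurableSpace α] {μ : Measure α} {f : α → ℝ} {C : ℝ}

theorem integral_const_sub_eq_setIntegral_Iio_measureReal_lt
    (hf : Integrable (fun x ↦ C - f x) μ) (hfC : ∀ᵐ x ∂μ, f x ≤ C) :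
    ∫ x, (C - f x) ∂μ = ∫ r in Iio C, μ.real {x | f x < r} :=
  calc ∫ x, (C - f x) ∂μ
    _ = ∫ r in Ioi 0, μ.real {x | r < C - f x} :=
        hf.integral_eq_integral_meas_lt (hfC.mono fun _ ↦ sub_nonneg_of_le)
    _ = ∫ r in (C - ·) ⁻¹' Iio C, μ.real {x | f x < C - r} := by
        simp only [preimage_const_sub_Iio, sub_self, lt_sub_comm]
    _ = ∫ r in Iio C, μ.real {x | f x < r} :=
        (volume.measurePreserving_sub_left C).setIntegral_preimage_emb
          (MeasurableEquiv.subLeft C).measurableEmbedding (fun r ↦ μ.real {x | f x < r}) (Iio C)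

theorem setIntegral_Iio_measureReal_lt_eq_setIntegral_Ico (hf : ∀ᵐ x ∂μ, 0 ≤ f x) :
    ∫ r in Iio C, μ.real {x | f x < r} = ∫ r in Ico 0 C, μ.real {x | f x < r} := by
  refine setIntegral_eq_of_subset_of_forall_sdiff_eq_zero measurableSet_Iio Ico_subset_Iio_self ?_
  rintro r ⟨hrC, hr⟩
  have r_neg : r < 0 := not_le.mp fun h ↦ hr ⟨h, hrC⟩
  have sublevel_null : μ {x | f x < r} = 0 :=
    measure_eq_zero_iff_ae_notMem.mpr (hf.mono fun _ hx ↦ not_lt.mpr (r_neg.le.trans hx))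
  simp only [Measure.real, sublevel_null, ENNReal.toReal_zero]

theorem const_mul_measureReal_univ_eq_setIntegral_add_integral [IsFiniteMeasure μ]
    (hf : AEStronglyMeasurable f μ) (hf_mem : ∀ᵐ x ∂μ, f x ∈ Icc 0 C) :
    C * μ.real univ = (∫ r in Ico 0 C, μ.real {x | f x < r}) + ∫ x, f x ∂μ := by
  have f_integrable : Integrable f μ := .of_mem_Icc 0 C hf.aemeasurable hf_mem
  have sub_integrable : Integrable (fun x ↦ C - f x) μ := (integrable_const C).sub f_integrable
  calc C * μ.real univ
    _ = ∫ _, C ∂μ := by rw [integral_const, smul_eq_mul, mul_comm]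
    _ = (∫ x, (C - f x) ∂μ) + ∫ x, f x ∂μ := by
        simp only [← integral_add sub_integrable f_integrable, sub_add_cancel]
    _ = (∫ r in Ico 0 C, μ.real {x | f x < r}) + ∫ x, f x ∂μ := by
        rw [integral_const_sub_eq_setIntegral_Iio_measureReal_lt sub_integrable
            (hf_mem.mono fun _ hx ↦ hx.2),
          setIntegral_Iio_measureReal_lt_eq_setIntegral_Ico (hf_mem.mono fun _ hx ↦ hx.1)]

end SublevelLayercake

theorem setOf_sub_lt_inter_Ico {τ s t : ℝ} (hst : s ≤ t) :
    {u | u - τ < s} ∩ Ico τ (τ + t) = Ico τ (τ + s) := by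
  ext u
  grind

theorem finite_measure_interval_identity_halfopen_general
    (m : Measure ℝ) (τ t : ℝ) (hm : m (Ico τ (τ + t)) ≠ ⊤) :
    t * m.real (Ico τ (τ + t))
      = (∫ s in Ico 0 t, m.real (Ico τ (τ + s))) + ∫ s in Ico τ (τ + t), (s - τ) ∂m := by
  have : IsFiniteMeasure (m.restrict (Ico τ (τ + t))) := isFiniteMeasure_restrict.mpr hm
  have offset_mem : ∀ᵐ u ∂m.restrict (Ico τ (τ + t)), u - τ ∈ Icc 0 t :=
    ae_restrict_of_forall_mem measurableSet_Ico fun u hu ↦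
      ⟨sub_nonneg.mpr hu.1, sub_le_iff_le_add'.mpr hu.2.le⟩
  have sublevel_measure : ∀ s ∈ Ico 0 t,
      (m.restrict (Ico τ (τ + t))).real {u | u - τ < s} = m.real (Ico τ (τ + s)) := fun s hs ↦ by
    rw [measureReal_restrict_apply (measurableSet_lt (by fun_prop) measurable_const),
      setOf_sub_lt_inter_Ico hs.2.le]
  rw [← measureReal_restrict_apply_univ, ← setIntegral_congr_fun measurableSet_Ico sublevel_measure]
  exact const_mul_measureReal_univ_eq_setIntegral_add_integral (by fun_prop) offset_mem

/-- Second identity of the paper's Lemma A.4: for a finite Borel measure `m` on `ℝ`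
and all `τ, t ∈ ℝ`,
`t · m([τ, τ+t)) = ∫_{[0,t)} m([τ, τ+s)) ds + ∫_{[τ, τ+t)} (s − τ) dm(s)`. -/
theorem finite_measure_interval_identity_halfopen
    (m : Measure ℝ) [IsFiniteMeasure m] (τ t : ℝ) :
    t * (m (Set.Ico τ (τ + t))).toReal
      = (∫ s in Set.Ico (0 : ℝ) t, (m (Set.Ico τ (τ + s))).toReal)
        + ∫ s in Set.Ico τ (τ + t), (s - τ) ∂m :=
  finite_measure_interval_identity_halfopen_general m τ t (measure_ne_top m _)
end

section
/- Let (X̃, ρ̃) be a metric space and φ̃: X̃ × [0,∞) → X̃ a continuous flow with φ̃(x̃,0) = x̃, the semigroup property, and disjoint orbits. Let X := {(ỹ,t) ∈ X̃ × [0,∞) : ỹ = φ̃(x̃,t) for some x̃}, with the subspace topology of X̃ × [0,∞), and assume there exists d: [0,∞) → (0,∞), bounded on every bounded interval, such that ρ̃(h(y₁), h(y₂)) ≤ max(d(t₁), d(t₂)) · ρ(y₁, y₂) for all y₁ = (ỹ₁,t₁), y₂ = (ỹ₂,t₂) ∈ X, where h: X → X̃ is the unique-starting-point map and ρ is a compatible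 metric on X̃ × [0,∞). Then the map F(x̃,t) := (φ̃(x̃,t), t) is a homeomorphism from X̃ × [0,∞) onto X, with inverse F⁻¹(ỹ,t) = (h(ỹ,t), t). -/
open scoped NNReal

def flowOrbit {Xt : Type*} (φ : Xt → ℝ≥0 → Xt) (x : Xt) : Set (Xt × ℝ≥0) :=
  {p : Xt × ℝ≥0 | ∃ t : ℝ≥0, p = (φ x t, t)}

def flowReachable {Xt : Type*} (φ : Xt → ℝ≥0 → Xt) : Set (Xt × ℝ≥0) :=
  {p : Xt × ℝ≥0 | ∃ x : Xt, p.1 = φ x p.2}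

open Filter Function Topology

/-- The pairs `(y, t)` such that `φ · t` takes the value `y`. This is `flowReachable` with an
arbitrary type of times and an arbitrary target space in place of `ℝ≥0` and the phase space. -/
def reachableSet {X Y T : Type*} (φ : X → T → Y) : Set (Y × T) :=
  {p | ∃ x, p.1 = φ x p.2}

theorem locallyLipschitz_of_dist_le_max_mul {α β : Type*} [PseudoMetricSpace α]
    [PseudoMetricSpace β] {f : α → β} {C : α → ℝ}
    (hC : ∀ a, (𝓝 a).IsBoundedUnder (· ≤ ·) C)
    (hf : ∀ x y, dist (f x) (f y) ≤ max (C x) (C y) * dist x y) :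
    LocallyLipschitz f := by
  intro a
  obtain ⟨M, hM⟩ := hC a
  refine ⟨M.toNNReal, {x | C x ≤ M}, hM, LipschitzOnWith.of_dist_le_mul fun x hx y hy => ?_⟩
  calc dist (f x) (f y) ≤ max (C x) (C y) * dist x y := hf x y
    _ ≤ M.toNNReal * dist x y := by
      gcongr
      exact (max_le hx hy).trans M.le_coe_toNNReal

theorem isBoundedUnder_le_nhds_of_forall_Iic {T β : Type*} [TopologicalSpace T] [LinearOrder T]
    [ClosedIciTopology T] [NoMaxOrder T] [LE β] {d : T → β}
    (hd : ∀ b, ∃ M, ∀ t ≤ b, d t ≤ M) (t : T) :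
    (𝓝 t).IsBoundedUnder (· ≤ ·) d := by
  obtain ⟨b, htb⟩ := exists_gt t
  obtain ⟨M, hM⟩ := hd b
  exact ⟨M, eventually_map.2 <| (eventually_le_nhds htb).mono hM⟩

theorem injective_of_pairwise_disjoint_flowOrbit {X : Type*} {φ : X → ℝ≥0 → X}
    (hφ : Pairwise (Disjoint on flowOrbit φ)) (t : ℝ≥0) : Injective (φ · t) := by
  intro x₁ x₂ hx
  by_contra hne
  exact Set.disjoint_left.1 (hφ hne) ⟨t, rfl⟩ ⟨t, Prod.ext hx rfl⟩

section ReachableSet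

variable {X Y T : Type*} [TopologicalSpace Y] [TopologicalSpace T] {φ : X → T → Y}
  {h : reachableSet φ → X}

/-- The map `(x, t) ↦ (φ x t, t)` as a homeomorphism onto the reachable set, given a continuous
choice `h` of starting points. -/
def reachableHomeomorph [TopologicalSpace X] (hφ : Continuous ↿φ)
    (hinj : ∀ t, Injective (φ · t)) (hh : ∀ y, φ (h y) y.1.2 = y.1.1) (hcont : Continuous h) :
    X × T ≃ₜ reachableSet φ where
  toFun q := ⟨(φ q.1 q.2, q.2), q.1, rfl⟩
  invFun y := (h y, y.1.2)
  left_inv _ := Prod.ext (hinj _ (hh _)) rfl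
  right_inv y := Subtype.ext (Prod.ext (hh y) rfl)
  continuous_toFun := (hφ.prodMk continuous_snd).subtype_mk _
  continuous_invFun := hcont.prodMk (continuous_snd.comp continuous_subtype_val)

variable [PseudoMetricSpace X]

theorem continuous_startingPoint_of_dist_le (ρ : PseudoMetricSpace (Y × T))
    (hρ : instTopologicalSpaceProd = ρ.toUniformSpace.toTopologicalSpace) {d : T → ℝ}
    (hd : ∀ t, (𝓝 t).IsBoundedUnder (· ≤ ·) d)
    (hbound : ∀ y₁ y₂, dist (h y₁) (h y₂) ≤ max (d y₁.1.2) (d y₂.1.2) * ρ.dist y₁.1 y₂.1) :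
    Continuous h := by
  let := ρ.replaceTopology hρ
  have htime : Continuous fun y : reachableSet φ => y.1.2 :=
    continuous_snd.comp continuous_subtype_val
  have hlip : LocallyLipschitz h :=
    locallyLipschitz_of_dist_le_max_mul
      (fun y => (htime.tendsto y).isBoundedUnder_comp (hd y.1.2)) hbound
  exact hlip.continuous

theorem flow_map_homeomorph_general (hφ : Continuous ↿φ) (hinj : ∀ t, Injective (φ · t))
    (hh : ∀ y, φ (h y) y.1.2 = y.1.1) (ρ : PseudoMetricSpace (Y × T))
    (hρ : instTopologicalSpaceProd = ρ.toUniformSpace.toTopologicalSpace) {d : T → ℝ}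
    (hd : ∀ t, (𝓝 t).IsBoundedUnder (· ≤ ·) d)
    (hbound : ∀ y₁ y₂, dist (h y₁) (h y₂) ≤ max (d y₁.1.2) (d y₂.1.2) * ρ.dist y₁.1 y₂.1) :
    ∃ e : X × T ≃ₜ reachableSet φ,
      (∀ q, (e q).1 = (φ q.1 q.2, q.2)) ∧ ∀ y, e.symm y = (h y, y.1.2) :=
  ⟨reachableHomeomorph hφ hinj hh (continuous_startingPoint_of_dist_le ρ hρ hd hbound),
    fun _ => rfl, fun _ => rfl⟩

end ReachableSet

/-- Homeomorphism statement of Lemma 4.5: under the disjoint-orbit condition and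
the metric bound of Condition 4.4, the map `F(x̃,t) := (φ̃(x̃,t), t)` is a
homeomorphism from `X̃ × [0,∞)` onto the reachable set `X`, with inverse
`F⁻¹(ỹ,t) = (h(ỹ,t), t)`. -/
theorem flow_map_homeomorph
    {Xt : Type*} [MetricSpace Xt] (φ : Xt → ℝ≥0 → Xt)
    (hφc : Continuous (fun p : Xt × ℝ≥0 => φ p.1 p.2))
    (hφ0 : ∀ x, φ x 0 = x)
    (hφsemi : ∀ (x : Xt) (s t : ℝ≥0), φ (φ x s) t = φ x (t + s))
    (hdisj : ∀ x₁ x₂ : Xt, x₁ ≠ x₂ → Disjoint (flowOrbit φ x₁) (flowOrbit φ x₂))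
    (h : flowReachable φ → Xt)
    (hh : ∀ y : flowReachable φ, φ (h y) (y : Xt × ℝ≥0).2 = (y : Xt × ℝ≥0).1)
    (ρ : Xt × ℝ≥0 → Xt × ℝ≥0 → ℝ)
    (hρ_self : ∀ p, ρ p p = 0)
    (hρ_eq : ∀ p q, ρ p q = 0 → p = q)
    (hρ_symm : ∀ p q, ρ p q = ρ q p)
    (hρ_tri : ∀ p q r, ρ p r ≤ ρ p q + ρ q r)
    (hρ_compat : ∀ s : Set (Xt × ℝ≥0),
      IsOpen s ↔ ∀ p ∈ s, ∃ ε > 0, ∀ q, ρ p q < ε → q ∈ s)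
    (d : ℝ≥0 → ℝ) (hd_pos : ∀ t, 0 < d t)
    (hd_bdd : ∀ T : ℝ≥0, ∃ M : ℝ, ∀ t ≤ T, d t ≤ M)
    (hbound : ∀ y₁ y₂ : flowReachable φ,
      dist (h y₁) (h y₂)
        ≤ max (d (y₁ : Xt × ℝ≥0).2) (d (y₂ : Xt × ℝ≥0).2) * ρ (y₁ : Xt × ℝ≥0) (y₂ : Xt × ℝ≥0)) :
    ∃ e : (Xt × ℝ≥0) ≃ₜ flowReachable φ,
      (∀ q : Xt × ℝ≥0, ((e q : flowReachable φ) : Xt × ℝ≥0) = (φ q.1 q.2, q.2)) ∧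
      (∀ y : flowReachable φ, e.symm y = ((h y, (y : Xt × ℝ≥0).2) : Xt × ℝ≥0)) := by
  exact flow_map_homeomorph_general hφc
    (injective_of_pairwise_disjoint_flowOrbit fun x₁ x₂ => hdisj x₁ x₂) hh
    (.ofDistTopology ρ hρ_self hρ_symm hρ_tri hρ_compat) rfl
    (isBoundedUnder_le_nhds_of_forall_Iic hd_bdd) hbound
end

section
/- Let X̃ be a Polish space (separable, completely metrizable) with compatible metric ρ̃, and φ̃: X̃ × [0,∞) → X̃ a continuous flow with φ̃(x̃,0) = x̃, the semigroup property, and disjoint orbits. Assume there exists d: [0,∞) → (0,∞), bounded on every bounded interval, such that ρ̃(h(y₁), h(y₂)) ≤ max(d(t₁), d(t₂)) · ρ(y₁, y₂) for all y₁ = (ỹ₁,t₁), y₂ = (ỹ₂,t₂) in X := {(ỹ,t) : ỹ = φ̃(x̃,t) for some x̃}, where h is the unique-starting-point map and ρ is a compatible metric on X̃ × [0,∞). Then X is a Borel-measurable subset of X̃ × [0,∞). -/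
open scoped NNReal

/-!
The reachable set is the image of `X̃ × [0,∞)` under `(x, t) ↦ (φ x t, t)`. Disjointness of the
orbits makes this map injective, and by the Lusin–Souslin theorem an injective measurable map
between standard Borel spaces has Borel image.
-/

/-- The space-time map of the flow: a starting point and a time go to the point reached, tagged with
that time, so that the line `{x} × [0,∞)` is carried onto the orbit of `x`. -/
def flowLift {Xt : Type*} (φ : Xt → ℝ≥0 → Xt) (p : Xt × ℝ≥0) : Xt × ℝ≥0 :=
  (φ p.1 p.2, p.2)

section FlowLift

variable {Xt : Type*} {φ : Xt → ℝ≥0 → Xt}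

theorem range_flowLift : Set.range (flowLift φ) = flowReachable φ := by
  ext ⟨y, t⟩
  simp [flowLift, flowReachable, eq_comm]

theorem flowLift_injective (hinj : ∀ t, Function.Injective (φ · t)) :
    Function.Injective (flowLift φ) := by
  rintro ⟨x₁, t⟩ ⟨x₂, s⟩ heq
  obtain ⟨hφ, rfl : t = s⟩ := Prod.mk.inj heq
  exact Prod.ext (hinj t hφ) rfl

theorem injective_of_pairwise_disjoint_flowOrbit_s10
    (hdisj : Pairwise (Function.onFun Disjoint (flowOrbit φ))) (t : ℝ≥0) :
    Function.Injective (φ · t) := by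
  intro x₁ x₂ heq
  by_contra hne
  have hmem : (φ x₁ t, t) ∈ flowOrbit φ x₂ := ⟨t, Prod.ext heq rfl⟩
  exact Set.disjoint_left.mp (hdisj hne) ⟨t, rfl⟩ hmem

theorem measurable_flowLift [MeasurableSpace Xt]
    (hφ : Measurable fun p : Xt × ℝ≥0 => φ p.1 p.2) : Measurable (flowLift φ) :=
  hφ.prodMk measurable_snd

theorem flowReachable_measurableSet_general [MeasurableSpace Xt] [StandardBorelSpace Xt]
    (hφ : Measurable fun p : Xt × ℝ≥0 => φ p.1 p.2)
    (hdisj : Pairwise (Function.onFun Disjoint (flowOrbit φ))) :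
    MeasurableSet (flowReachable φ) := by
  have hinj : Function.Injective (flowLift φ) :=
    flowLift_injective (injective_of_pairwise_disjoint_flowOrbit_s10 hdisj)
  rw [← range_flowLift, ← Set.image_univ]
  exact MeasurableSet.univ.image_of_measurable_injOn (measurable_flowLift hφ) hinj.injOn

end FlowLift

/-- Borel-ness of the reachable set `X` asserted in Lemma 4.5: for a Polish space
`X̃` (with compatible metric `ρ̃ = dist`), a continuous flow with disjoint orbits
satisfying the metric bound of Condition 4.4, the set `X` of points reachable by
the flow is a Borel subset of `X̃ × [0,∞)`. -/
theorem flowReachable_measurableSet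
    {Xt : Type*} [MetricSpace Xt] [PolishSpace Xt] (φ : Xt → ℝ≥0 → Xt)
    (hφc : Continuous (fun p : Xt × ℝ≥0 => φ p.1 p.2))
    (hφ0 : ∀ x, φ x 0 = x)
    (hφsemi : ∀ (x : Xt) (s t : ℝ≥0), φ (φ x s) t = φ x (t + s))
    (hdisj : ∀ x₁ x₂ : Xt, x₁ ≠ x₂ → Disjoint (flowOrbit φ x₁) (flowOrbit φ x₂))
    (h : flowReachable φ → Xt)
    (hh : ∀ y : flowReachable φ, φ (h y) (y : Xt × ℝ≥0).2 = (y : Xt × ℝ≥0).1)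
    (ρ : Xt × ℝ≥0 → Xt × ℝ≥0 → ℝ)
    (hρ_self : ∀ p, ρ p p = 0)
    (hρ_eq : ∀ p q, ρ p q = 0 → p = q)
    (hρ_symm : ∀ p q, ρ p q = ρ q p)
    (hρ_tri : ∀ p q r, ρ p r ≤ ρ p q + ρ q r)
    (hρ_compat : ∀ s : Set (Xt × ℝ≥0),
      IsOpen s ↔ ∀ p ∈ s, ∃ ε > 0, ∀ q, ρ p q < ε → q ∈ s)
    (d : ℝ≥0 → ℝ) (hd_pos : ∀ t, 0 < d t)
    (hd_bdd : ∀ T : ℝ≥0, ∃ M : ℝ, ∀ t ≤ T, d t ≤ M)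
    (hbound : ∀ y₁ y₂ : flowReachable φ,
      dist (h y₁) (h y₂)
        ≤ max (d (y₁ : Xt × ℝ≥0).2) (d (y₂ : Xt × ℝ≥0).2) * ρ (y₁ : Xt × ℝ≥0) (y₂ : Xt × ℝ≥0)) :
    @MeasurableSet _ (borel (Xt × ℝ≥0)) (flowReachable φ) := by
  borelize Xt
  rw [← BorelSpace.measurable_eq (α := Xt × ℝ≥0)]
  exact flowReachable_measurableSet_general hφc.measurable hdisj
end

section
/- Let (α, 𝒜) be a measurable space, let L₁ and L₂ be finite measures on α, and let g₁, g₂: α × [0,∞) → [0,∞) be bounded jointly measurable functions. For i = 1,2 define the measure νᵢ on α × [0,∞) by νᵢ(A) := ∫_α ∫₀^∞ 1_A(a,u) gᵢ(a,u) du Lᵢ(da) for measurable A ⊆ α × [0,∞) (du is Lebesgue measure). Assume ν₂(A) ≤ ν₁(A) for every measurable A. Then there exist a finite measure L on α and a bounded measurable function g: α × [0,∞) → [0,∞) such that ν₁(A) = ν₂(A) + ∫_α ∫₀^∞ 1_A(a,u) g(a,u) du L(da) for every measurable A ⊆ α × [0,∞); i.e., the difference ν₁ − ν₂ again has a bounded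 density with respect to a product of a finite measure and Lebesgue measure. -/
open MeasureTheory
open scoped ENNReal NNReal

/-! A measure `μ ≤ ν` has a Radon–Nikodym derivative `f ≤ 1` with respect to `ν`, so that
`ν - μ` has density `1 - f` with respect to `ν`. If `ν` itself has density `g` with respect to a
base measure `m`, then `ν - μ` has density `g * (1 - f) ≤ g` with respect to the same `m`: the
difference of two normal measures keeps the base measure and the bound of the larger one. -/

section Density

variable {Ω : Type*} [MeasurableSpace Ω]

theorem exists_withDensity_le_one_add_eq_of_le {μ ν : Measure Ω} [SigmaFinite ν] (hle : μ ≤ ν) :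
    ∃ d : Ω → ℝ≥0∞, Measurable d ∧ d ≤ 1 ∧ μ + ν.withDensity d = ν := by
  have : SigmaFinite μ := Measure.sigmaFinite_of_le ν hle
  let f := μ.rnDeriv ν
  have hf : Measurable f := Measure.measurable_rnDeriv μ ν
  have hf_compl : f + (1 - f) =ᵐ[ν] 1 := by
    filter_upwards [Measure.rnDeriv_le_one_of_le hle] with x hx
    exact add_tsub_cancel_of_le hx
  refine ⟨1 - f, measurable_one.sub hf, tsub_le_self, ?_⟩
  calc μ + ν.withDensity (1 - f)
      = ν.withDensity f + ν.withDensity (1 - f) := by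
        rw [Measure.withDensity_rnDeriv_eq μ ν (Measure.absolutelyContinuous_of_le hle)]
    _ = ν.withDensity (f + (1 - f)) := (withDensity_add_left hf _).symm
    _ = ν := by rw [withDensity_congr_ae hf_compl, withDensity_one]

theorem exists_withDensity_le_add_eq_of_le_withDensity {μ m : Measure Ω} [SigmaFinite m]
    {g : Ω → ℝ≥0∞} (hg : Measurable g) (hg_fin : ∀ᵐ x ∂m, g x ≠ ∞)
    (hle : μ ≤ m.withDensity g) :
    ∃ h : Ω → ℝ≥0∞, Measurable h ∧ h ≤ g ∧ μ + m.withDensity h = m.withDensity g := by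
  have : SigmaFinite (m.withDensity g) := SigmaFinite.withDensity_of_ne_top hg_fin
  obtain ⟨d, hd, hd_one, h_add⟩ := exists_withDensity_le_one_add_eq_of_le hle
  refine ⟨g * d, hg.mul hd, mul_le_of_le_one_right' hd_one, ?_⟩
  rw [withDensity_mul m hg hd, h_add]

end Density

section Product

variable {α β : Type*} [MeasurableSpace α] [MeasurableSpace β]

theorem withDensity_prod_apply {L : Measure α} {κ : Measure β} [SFinite κ]
    {g : α × β → ℝ≥0∞} (hg : Measurable g) {A : Set (α × β)} (hA : MeasurableSet A) :
    (L.prod κ).withDensity g A = ∫⁻ a, ∫⁻ u, A.indicator g (a, u) ∂κ ∂L := by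
  rw [withDensity_apply g hA, ← lintegral_indicator hA,
    lintegral_prod _ (hg.indicator hA).aemeasurable]

theorem normal_measure_difference_general {L : Measure α} {κ : Measure β} [SigmaFinite L]
    [SigmaFinite κ] {g : α × β → ℝ≥0∞} (hg : Measurable g)
    (hg_fin : ∀ᵐ q ∂L.prod κ, g q ≠ ∞) {ν : Measure (α × β)}
    (hle : ∀ A : Set (α × β), MeasurableSet A →
      ν A ≤ ∫⁻ a, ∫⁻ u, A.indicator g (a, u) ∂κ ∂L) :
    ∃ h : α × β → ℝ≥0∞, Measurable h ∧ h ≤ g ∧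
      ∀ A : Set (α × β), MeasurableSet A →
        ∫⁻ a, ∫⁻ u, A.indicator g (a, u) ∂κ ∂L
          = ν A + ∫⁻ a, ∫⁻ u, A.indicator h (a, u) ∂κ ∂L := by
  have hν : ν ≤ (L.prod κ).withDensity g :=
    Measure.le_intro fun A hA _ => (hle A hA).trans_eq (withDensity_prod_apply hg hA).symm
  obtain ⟨h, hh, h_le, h_add⟩ := exists_withDensity_le_add_eq_of_le_withDensity hg hg_fin hν
  refine ⟨h, hh, h_le, fun A hA => ?_⟩
  rw [← withDensity_prod_apply hg hA, ← withDensity_prod_apply hh hA, ← h_add, Measure.add_apply]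

end Product

/-- Part (b) of Lemma 4.10, in the coordinates of Definition 4.9: if two "normal"
measures (those of the form `g(a,u) du L(da)` with `L` finite and `g` bounded
measurable) satisfy `ν₂ ≤ ν₁` set-wise, then their difference is again normal. -/
theorem normal_measure_difference
    {α : Type*} [MeasurableSpace α]
    (L₁ L₂ : Measure α) [IsFiniteMeasure L₁] [IsFiniteMeasure L₂]
    (g₁ g₂ : α × ℝ → ℝ≥0∞) (hm₁ : Measurable g₁) (hm₂ : Measurable g₂)
    (C₁ C₂ : ℝ≥0) (hb₁ : ∀ q, g₁ q ≤ C₁) (hb₂ : ∀ q, g₂ q ≤ C₂)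
    (hle : ∀ A : Set (α × ℝ), MeasurableSet A →
      (∫⁻ a, (∫⁻ u in Set.Ici (0 : ℝ), Set.indicator A g₂ (a, u)) ∂L₂)
        ≤ ∫⁻ a, (∫⁻ u in Set.Ici (0 : ℝ), Set.indicator A g₁ (a, u)) ∂L₁) :
    ∃ (L : Measure α) (g : α × ℝ → ℝ≥0∞),
      IsFiniteMeasure L ∧ Measurable g ∧ (∃ C : ℝ≥0, ∀ q, g q ≤ C) ∧
      ∀ A : Set (α × ℝ), MeasurableSet A →
        (∫⁻ a, (∫⁻ u in Set.Ici (0 : ℝ), Set.indicator A g₁ (a, u)) ∂L₁)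
          = (∫⁻ a, (∫⁻ u in Set.Ici (0 : ℝ), Set.indicator A g₂ (a, u)) ∂L₂)
            + ∫⁻ a, (∫⁻ u in Set.Ici (0 : ℝ), Set.indicator A g (a, u)) ∂L := by
  have hg₁_fin (q : α × ℝ) : g₁ q ≠ ∞ := ((hb₁ q).trans_lt ENNReal.coe_lt_top).ne
  obtain ⟨g, hg, hg_le, h_diff⟩ := normal_measure_difference_general hm₁ (.of_forall hg₁_fin)
    fun A hA => (withDensity_prod_apply hm₂ hA).trans_le (hle A hA)
  refine ⟨L₁, g, inferInstance, hg, ⟨C₁, fun q => (hg_le q).trans (hb₁ q)⟩, fun A hA => ?_⟩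
  rw [h_diff A hA, withDensity_prod_apply hm₂ hA]
end

section
/- Let m be a finite Borel measure on [0,∞) and c ∈ [0,∞). Define G(t) := c · m([0,t]) and u* := inf{ t ∈ [0,∞) : G(t) ≥ 1 }, and assume u* < ∞. Then: (i) c · m([0,u*]) ≥ 1 and c · m([0,u*)) ≤ 1; and (ii) the measure p on [0,∞) defined by p(I) := c · m(I ∩ [0,u*)) + (1 − c · m([0,u*))) · 1{u* ∈ I} for Borel sets I is a probability measure satisfying p(I) ≤ c · m(I) for every Borel set I ⊆ [0,∞). -/
open MeasureTheory
open scoped ENNReal NNReal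

/-- The threshold time `u* := inf{ t ≥ 0 : c · m([0,t]) ≥ 1 }`. -/
noncomputable def uStar (m : Measure ℝ) (c : ℝ≥0) : ℝ :=
  sInf {t : ℝ | 0 ≤ t ∧ 1 ≤ (c : ℝ≥0∞) * m (Set.Icc 0 t)}

/-!
Since `t ↦ c · m([0,t])` is right-continuous, it has already reached `1` at `u*`, while its left
limit there, `c · m([0,u*))`, is at most `1`. So the mass `1 - c · m([0,u*))` missing below `u*` is
at most `c · m({u*})`, and placing it at `u*` gives a probability measure dominated by `c · m`.
-/

open Set

section Threshold

variable {α : Type*} [LinearOrder α] [TopologicalSpace α] [OrderTopology α] [DenselyOrdered α]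
  [FirstCountableTopology α] [MeasurableSpace α] {μ : Measure α} {a b : α} {r : ℝ≥0∞}

lemma measure_Ico_le_of_forall_measure_Icc_le (h : ∀ t ∈ Ico a b, μ (Icc a t) ≤ r) :
    μ (Ico a b) ≤ r := by
  rcases le_or_gt b a with hba | hab
  · simp [Ico_eq_empty_of_le hba]
  obtain ⟨v, hv, hvmem, hlim⟩ := exists_seq_strictMono_tendsto' hab
  have hcover : Ico a b ⊆ ⋃ n, Icc a (v n) := fun x hx ↦ by
    obtain ⟨n, hn⟩ := (hlim.eventually_const_lt hx.2).exists
    exact mem_iUnion.2 ⟨n, hx.1, hn.le⟩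
  have hmono : Monotone fun n ↦ Icc a (v n) := fun _ _ hij ↦
    Icc_subset_Icc_right (hv.monotone hij)
  calc μ (Ico a b) ≤ μ (⋃ n, Icc a (v n)) := measure_mono hcover
    _ = ⨆ n, μ (Icc a (v n)) := hmono.measure_iUnion
    _ ≤ r := iSup_le fun n ↦ h (v n) ⟨(hvmem n).1.le, (hvmem n).2⟩

lemma le_measure_Icc_of_forall_le_measure_Icc [OpensMeasurableSpace α]
    (hfin : ∃ t > b, μ (Icc a t) ≠ ∞) (h : ∀ t > b, r ≤ μ (Icc a t)) : r ≤ μ (Icc a b) := by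
  have ⟨t, htb, _⟩ := hfin
  have hInter : ⋂ t > b, Icc a t = Icc a b := by
    ext x
    simp only [mem_iInter, mem_Icc]
    exact ⟨fun hx ↦ ⟨(hx t htb).1, le_of_forall_gt_imp_ge_of_dense fun s hs ↦ (hx s hs).2⟩,
      fun hx s hs ↦ ⟨hx.1, hx.2.trans hs.le⟩⟩
  have hlim := tendsto_measure_biInter_gt (μ := μ)
    (fun _ _ ↦ measurableSet_Icc.nullMeasurableSet)
    (fun _ _ _ hij ↦ Icc_subset_Icc_right hij) hfin
  rw [hInter] at hlim
  have := nhdsGT_neBot_of_exists_gt ⟨t, htb⟩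
  exact ge_of_tendsto hlim (eventually_mem_nhdsWithin.mono h)

end Threshold

section RestrictAddAtom

variable {α : Type*} [MeasurableSpace α] {μ : Measure α} {s t : Set α} {u : α}

/-- The restriction of `μ` to `s`, topped up to total mass one by an atom at `u`. The atom has mass
`1 - μ s` truncated at zero, so the total mass is one only when `μ s ≤ 1`. -/
noncomputable def restrictAddAtom (μ : Measure α) (s : Set α) (u : α) : Measure α :=
  μ.restrict s + (1 - μ s) • Measure.dirac u

lemma restrictAddAtom_apply (ht : MeasurableSet t) :
    restrictAddAtom μ s u t = μ (t ∩ s) + (1 - μ s) * t.indicator 1 u := by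
  simp only [restrictAddAtom, Measure.add_apply, Measure.smul_apply, smul_eq_mul,
    Measure.restrict_apply ht, Measure.dirac_apply' u ht]

lemma isProbabilityMeasure_restrictAddAtom (hs : μ s ≤ 1) :
    IsProbabilityMeasure (restrictAddAtom μ s u) where
  measure_univ := by
    simp only [restrictAddAtom_apply MeasurableSet.univ, univ_inter, indicator_univ,
      Pi.one_apply, mul_one, add_tsub_cancel_of_le hs]

lemma restrictAddAtom_le [MeasurableSingletonClass α] (hu : u ∉ s) (h : 1 ≤ μ (insert u s)) :
    restrictAddAtom μ s u ≤ μ := by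
  have hdisj : Disjoint s {u} := disjoint_singleton_right.2 hu
  have hatom : 1 - μ s ≤ μ {u} := by
    rwa [tsub_le_iff_left, ← measure_union hdisj (measurableSet_singleton u), union_singleton]
  calc restrictAddAtom μ s u ≤ μ.restrict s + μ {u} • Measure.dirac u := by
        unfold restrictAddAtom
        gcongr
    _ = μ.restrict (s ∪ {u}) := by
        rw [← Measure.restrict_singleton,
          Measure.restrict_union hdisj (measurableSet_singleton u)]
    _ ≤ μ := Measure.restrict_le_self

end RestrictAddAtom

section UStar

variable {m : Measure ℝ} {c : ℝ≥0}

lemma uStar_nonneg : 0 ≤ uStar m c :=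
  Real.sInf_nonneg fun _ ht ↦ ht.1

lemma mul_measure_Icc_lt_one_of_lt_uStar {t : ℝ} (ht₀ : 0 ≤ t) (ht : t < uStar m c) :
    c * m (Icc 0 t) < 1 := by
  by_contra! hle
  exact ht.not_ge (csInf_le ⟨0, fun _ hx ↦ hx.1⟩ ⟨ht₀, hle⟩)

lemma one_le_mul_measure_Icc_of_uStar_lt
    (hne : {t : ℝ | 0 ≤ t ∧ 1 ≤ (c : ℝ≥0∞) * m (Icc 0 t)}.Nonempty)
    {t : ℝ} (ht : uStar m c < t) : 1 ≤ c * m (Icc 0 t) := by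
  obtain ⟨s, hs, hst⟩ := exists_lt_of_csInf_lt hne ht
  exact hs.2.trans (by gcongr)

lemma mul_measure_Ico_uStar_le_one : c * m (Ico 0 (uStar m c)) ≤ 1 :=
  measure_Ico_le_of_forall_measure_Icc_le (μ := (c : ℝ≥0∞) • m) fun _ ht ↦
    (mul_measure_Icc_lt_one_of_lt_uStar ht.1 ht.2).le

lemma one_le_mul_measure_Icc_uStar [IsLocallyFiniteMeasure m]
    (hne : {t : ℝ | 0 ≤ t ∧ 1 ≤ (c : ℝ≥0∞) * m (Icc 0 t)}.Nonempty) :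
    1 ≤ c * m (Icc 0 (uStar m c)) := by
  obtain ⟨t, ht⟩ := exists_gt (uStar m c)
  have hfin : c * m (Icc 0 t) ≠ ∞ :=
    ENNReal.mul_ne_top ENNReal.coe_ne_top isCompact_Icc.measure_ne_top
  exact le_measure_Icc_of_forall_le_measure_Icc (μ := (c : ℝ≥0∞) • m) ⟨t, ht, hfin⟩ fun _ ↦
    one_le_mul_measure_Icc_of_uStar_lt hne

end UStar

theorem stopping_kernel_construction_general
    (m : Measure ℝ) [IsLocallyFiniteMeasure m] (c : ℝ≥0)
    (hne : {t : ℝ | 0 ≤ t ∧ 1 ≤ (c : ℝ≥0∞) * m (Set.Icc 0 t)}.Nonempty) :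
    (1 ≤ (c : ℝ≥0∞) * m (Set.Icc 0 (uStar m c)) ∧
      (c : ℝ≥0∞) * m (Set.Ico 0 (uStar m c)) ≤ 1) ∧
    IsProbabilityMeasure
      ((c : ℝ≥0∞) • m.restrict (Set.Ico 0 (uStar m c))
        + (1 - (c : ℝ≥0∞) * m (Set.Ico 0 (uStar m c))) • Measure.dirac (uStar m c)) ∧
    (∀ I : Set ℝ, MeasurableSet I →
      ((c : ℝ≥0∞) • m.restrict (Set.Ico 0 (uStar m c))
        + (1 - (c : ℝ≥0∞) * m (Set.Ico 0 (uStar m c))) • Measure.dirac (uStar m c)) I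
        = (c : ℝ≥0∞) * m (I ∩ Set.Ico 0 (uStar m c))
          + (1 - (c : ℝ≥0∞) * m (Set.Ico 0 (uStar m c)))
            * Set.indicator I (fun _ => (1 : ℝ≥0∞)) (uStar m c)) ∧
    (∀ I : Set ℝ, MeasurableSet I →
      ((c : ℝ≥0∞) • m.restrict (Set.Ico 0 (uStar m c))
        + (1 - (c : ℝ≥0∞) * m (Set.Ico 0 (uStar m c))) • Measure.dirac (uStar m c)) I
        ≤ (c : ℝ≥0∞) * m I) := by
  have hIcc := one_le_mul_measure_Icc_uStar hne
  have hIco := mul_measure_Ico_uStar_le_one (m := m) (c := c)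
  have hinsert : 1 ≤ ((c : ℝ≥0∞) • m) (insert (uStar m c) (Ico 0 (uStar m c))) := by
    rwa [Ico_insert_right uStar_nonneg]
  rw [← Measure.restrict_smul]
  exact ⟨⟨hIcc, hIco⟩, isProbabilityMeasure_restrictAddAtom hIco,
    fun _ hI ↦ restrictAddAtom_apply hI,
    fun I _ ↦ restrictAddAtom_le right_notMem_Ico hinsert I⟩

/-- The construction and domination property of the stopping kernel (parts (i) and
(iii) of the proof of Lemma 6.4, restricted to a single orbit): with
`G(t) := c·m([0,t])` and `u* := inf{t ≥ 0 : G(t) ≥ 1} < ∞`, one has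
`c·m([0,u*]) ≥ 1`, `c·m([0,u*)) ≤ 1`, and the measure
`p(I) := c·m(I ∩ [0,u*)) + (1 − c·m([0,u*)))·1{u* ∈ I}` is a probability
measure with `p(I) ≤ c·m(I)` for every Borel set `I`. -/
theorem stopping_kernel_construction
    (m : Measure ℝ) [IsFiniteMeasure m] (hm0 : m (Set.Iio (0 : ℝ)) = 0)
    (c : ℝ≥0)
    (hne : {t : ℝ | 0 ≤ t ∧ 1 ≤ (c : ℝ≥0∞) * m (Set.Icc 0 t)}.Nonempty) :
    (1 ≤ (c : ℝ≥0∞) * m (Set.Icc 0 (uStar m c)) ∧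
      (c : ℝ≥0∞) * m (Set.Ico 0 (uStar m c)) ≤ 1) ∧
    IsProbabilityMeasure
      ((c : ℝ≥0∞) • m.restrict (Set.Ico 0 (uStar m c))
        + (1 - (c : ℝ≥0∞) * m (Set.Ico 0 (uStar m c))) • Measure.dirac (uStar m c)) ∧
    (∀ I : Set ℝ, MeasurableSet I →
      ((c : ℝ≥0∞) • m.restrict (Set.Ico 0 (uStar m c))
        + (1 - (c : ℝ≥0∞) * m (Set.Ico 0 (uStar m c))) • Measure.dirac (uStar m c)) I
        = (c : ℝ≥0∞) * m (I ∩ Set.Ico 0 (uStar m c))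
          + (1 - (c : ℝ≥0∞) * m (Set.Ico 0 (uStar m c)))
            * Set.indicator I (fun _ => (1 : ℝ≥0∞)) (uStar m c)) ∧
    (∀ I : Set ℝ, MeasurableSet I →
      ((c : ℝ≥0∞) • m.restrict (Set.Ico 0 (uStar m c))
        + (1 - (c : ℝ≥0∞) * m (Set.Ico 0 (uStar m c))) • Measure.dirac (uStar m c)) I
        ≤ (c : ℝ≥0∞) * m I) := by
  exact stopping_kernel_construction_general m c hne
end
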